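/- Let s ≥ 1, let 0 ≤ q ≤ s, and set n = T_s + q. For every pair of natural numbers (a, b) with a + b = ρ(q) and T_a + T_b ≤ q, there exists a partition λ of n with deg(λ) = Δ_n, A(λ) = a, and B(λ) = b. Hence the set of pairs (A(λ), B(λ)) realized by degree-maximizing partitions of n is exactly {(a,b) ∈ ℕ² : a + b = ρ(q), T_a + T_b ≤ q}. -/

import Mathlib

/-!
Let `λ ⊢ T s + q` with `q ≤ s` have `r` part sizes, `a` gaps and `b` repeated sizes.

A gap below the `k`-th largest part size raises the `k` largest sizes by at least one above the
staircase `1, …, r`, and the repeated sizes contribute at least `1 + ⋯ + b` once more. Hence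
`T r + T a + T b ≤ n` (`T_supp_add_le`), which forces `r ≤ s`. If `r = s` this gives
`T a + T b ≤ q`, so `a + b ≤ ρ(q)`. If `r < s`, then `a, b ≤ r` gives
`deg λ ≤ r (r + 1) ≤ s (s - 1)`, and the boundary case is excluded by the size of `n`. So every
partition of degree at least `s (s - 1) + ρ(q)` has an admissible profile (`profile_of_le_deg`).

Conversely, for an admissible pair `(a, b)` put `d = q - T a - T b`; maximality of `a + b` gives
`d ≤ a`. Take the staircase `1, …, s`, open a gap below each of its `a` largest parts, repeat
`1, …, b`, and add `d` to the largest part (`exists_partition`). As `d = 0` when `a = 0`, the last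
step only widens an existing gap. This partition has degree `s (s - 1) + ρ(q)`.
-/

namespace PartitionDegree

/-- The `m`-th triangular number. -/
def T (m : ℕ) : ℕ := m * (m + 1) / 2

/-- The number of distinct part sizes of a partition. -/
def supp {n : ℕ} (lam : n.Partition) : ℕ := lam.parts.toFinset.card

/-- The gap-bonus count: distinct part sizes `L ≥ 2` such that `L - 1` is not a part size. -/
def gapBonus {n : ℕ} (lam : n.Partition) : ℕ :=
  (lam.parts.toFinset.filter (fun L => 2 ≤ L ∧ (L - 1) ∉ lam.parts)).card

/-- The multiplicity-bonus count: distinct part sizes occurring with multiplicity at least 2. -/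
def multBonus {n : ℕ} (lam : n.Partition) : ℕ :=
  (lam.parts.toFinset.filter (fun L => 2 ≤ lam.parts.count L)).card

/-- The degree of a partition in the partition graph. -/
def deg {n : ℕ} (lam : n.Partition) : ℕ :=
  supp lam * (supp lam - 1) + gapBonus lam + multBonus lam

/-- The maximal degree over all partitions of `n`. -/
def maxDeg (n : ℕ) : ℕ := Finset.univ.sup (fun lam : n.Partition => deg lam)

/-- `ρ(q)`: the maximum of `a + b` over pairs with `T a + T b ≤ q`. -/
noncomputable def rho (q : ℕ) : ℕ := sSup {c : ℕ | ∃ a b : ℕ, c = a + b ∧ T a + T b ≤ q}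

/-- `mu` is the conjugate of `lam`: for each `k ≥ 1`, the multiplicity of `k` in `mu`
equals (number of parts of `lam` that are `≥ k`) minus (number of parts `≥ k + 1`). -/
def IsConjugate {n : ℕ} (lam mu : n.Partition) : Prop :=
  ∀ k : ℕ, 1 ≤ k →
    mu.parts.count k =
      Multiset.countP (fun p => k ≤ p) lam.parts -
        Multiset.countP (fun p => k + 1 ≤ p) lam.parts

lemma two_mul_T (m : ℕ) : 2 * T m = m * (m + 1) :=
  Nat.mul_div_cancel' (Nat.even_mul_succ_self m).two_dvd

lemma T_succ (m : ℕ) : T (m + 1) = T m + (m + 1) := by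
  have h1 := two_mul_T m
  have h2 := two_mul_T (m + 1)
  nlinarith

lemma T_zero : T 0 = 0 := rfl

lemma le_T (m : ℕ) : m ≤ T m := by
  cases m with
  | zero => simp
  | succ k => rw [T_succ]; omega

lemma T_mono {a b : ℕ} (h : a ≤ b) : T a ≤ T b :=
  monotone_nat_of_le_succ (fun m => by rw [T_succ]; omega) h

lemma sum_range_succ_eq_T (m : ℕ) : ∑ i ∈ Finset.range m, (i + 1) = T m := by
  induction m with
  | zero => rfl
  | succ k ih => rw [Finset.sum_range_succ, ih, T_succ]

/-! ### The function `ρ` -/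

lemma rho_bddAbove (q : ℕ) : BddAbove {c : ℕ | ∃ a b : ℕ, c = a + b ∧ T a + T b ≤ q} := by
  refine ⟨q, ?_⟩
  rintro c ⟨a, b, rfl, h⟩
  have := le_T a
  have := le_T b
  omega

lemma le_rho {a b q : ℕ} (h : T a + T b ≤ q) : a + b ≤ rho q :=
  le_csSup (rho_bddAbove q) ⟨a, b, rfl, h⟩

lemma exists_rho (q : ℕ) : ∃ a b : ℕ, a + b = rho q ∧ T a + T b ≤ q := by
  have hne : {c : ℕ | ∃ a b : ℕ, c = a + b ∧ T a + T b ≤ q}.Nonempty :=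
    ⟨0, 0, 0, rfl, by simp [T_zero]⟩
  obtain ⟨a, b, h, h'⟩ := Nat.sSup_mem hne (rho_bddAbove q)
  exact ⟨a, b, h.symm, h'⟩

/-! ### The triangular lower bound for the size of a partition -/

/-- The elements of `S` lying directly above a gap. -/
def gaps (S : Finset ℕ) : Finset ℕ := S.filter (fun L => 2 ≤ L ∧ L - 1 ∉ S)

lemma gaps_insert {S : Finset ℕ} {m : ℕ} (hm : ∀ x ∈ S, x < m) :
    gaps (insert m S) = if 2 ≤ m ∧ m - 1 ∉ S then insert m (gaps S) else gaps S := by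
  ext x
  have hmS : m ∉ S := fun h => lt_irrefl _ (hm m h)
  have key : ∀ y ∈ S, y - 1 ≠ m := fun y hy => by have := hm y hy; omega
  split_ifs with h <;> simp only [gaps, Finset.mem_filter, Finset.mem_insert] <;> grind

/-- Induction on the largest element. The bound `#S + #(gaps S) ≤ max S` is what lets a new largest
element above a gap pay for the increase of both triangular numbers. -/
lemma T_card_add_le (S : Finset ℕ) : (∀ x ∈ S, 0 < x) →
    T S.card + T (gaps S).card ≤ ∑ x ∈ S, x ∧
      ∀ M, (∀ y ∈ S, y ≤ M) → S.card + (gaps S).card ≤ M := by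
  induction S using Finset.induction_on_max with
  | empty => intro _; simp [gaps, T_zero]
  | insert m S hm ih =>
    intro hpos
    have hmS : m ∉ S := fun h => lt_irrefl _ (hm m h)
    obtain ⟨ih1, ih2⟩ := ih (fun x hx => hpos x (Finset.mem_insert_of_mem hx))
    have hm0 := hpos m (Finset.mem_insert_self _ _)
    have hc : (insert m S).card = S.card + 1 := Finset.card_insert_of_notMem hmS
    have hs : ∑ x ∈ insert m S, x = m + ∑ x ∈ S, x := Finset.sum_insert hmS
    have h1 := ih2 (m - 1) (fun y hy => by have := hm y hy; omega)
    rw [hc, hs, gaps_insert hm, T_succ]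
    split_ifs with h
    · have hmg : m ∉ gaps S := fun h' => hmS (Finset.mem_filter.1 h').1
      have h2 := ih2 (m - 2) (fun y hy => by
        have := hm y hy
        have : y ≠ m - 1 := fun e => h.2 (e ▸ hy)
        omega)
      rw [Finset.card_insert_of_notMem hmg, T_succ]
      refine ⟨by omega, fun M hM => ?_⟩
      have := hM m (Finset.mem_insert_self _ _)
      omega
    · refine ⟨by omega, fun M hM => ?_⟩
      have := hM m (Finset.mem_insert_self _ _)
      omega

lemma gapBonus_eq {n : ℕ} (lam : n.Partition) :
    gapBonus lam = (gaps lam.parts.toFinset).card := by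
  simp [gapBonus, gaps]

lemma T_supp_add_le {n : ℕ} (lam : n.Partition) :
    T (supp lam) + T (gapBonus lam) + T (multBonus lam) ≤ n := by
  have hpos : ∀ x ∈ lam.parts.toFinset, 0 < x :=
    fun x hx => lam.parts_pos (Multiset.mem_toFinset.1 hx)
  have h1 := (T_card_add_le _ hpos).1
  rw [← gapBonus_eq] at h1
  have h2 := (T_card_add_le (lam.parts.toFinset.filter (fun L => 2 ≤ lam.parts.count L))
    (fun x hx => hpos x (Finset.mem_filter.1 hx).1)).1
  have h3 : ∑ x ∈ lam.parts.toFinset, x +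
      ∑ x ∈ lam.parts.toFinset.filter (fun L => 2 ≤ lam.parts.count L), x ≤ n := by
    conv_rhs => rw [← lam.parts_sum, Finset.sum_multiset_count]
    rw [Finset.sum_filter, ← Finset.sum_add_distrib]
    refine Finset.sum_le_sum fun x hx => ?_
    have h4 : 1 ≤ lam.parts.count x := Multiset.one_le_count_iff_mem.2 (Multiset.mem_toFinset.1 hx)
    rw [smul_eq_mul]
    split_ifs with h <;> nlinarith
  unfold multBonus supp
  omega

/-! ### Profiles of partitions of large degree -/

lemma gapBonus_le_supp {n : ℕ} (lam : n.Partition) : gapBonus lam ≤ supp lam :=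
  Finset.card_filter_le _ _

lemma multBonus_le_supp {n : ℕ} (lam : n.Partition) : multBonus lam ≤ supp lam :=
  Finset.card_filter_le _ _

lemma supp_ne_zero {n : ℕ} (hn : n ≠ 0) (lam : n.Partition) : supp lam ≠ 0 := by
  intro h
  have h0 : lam.parts = 0 := by simpa [supp] using h
  have := lam.parts_sum
  rw [h0] at this
  exact hn this.symm

/-- If every part size has a gap below it and some size is repeated, then some size `L ≥ 2`
occurs at least twice. -/
lemma four_le_of_gapBonus_eq {n : ℕ} (lam : n.Partition) (hg : gapBonus lam = supp lam)
    (hm : multBonus lam ≠ 0) : 4 ≤ n := by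
  obtain ⟨L, hL⟩ := Finset.card_ne_zero.1 hm
  obtain ⟨hL1, hL2⟩ := Finset.mem_filter.1 hL
  have hL3 := (Finset.filter_card_eq hg L hL1).1
  have h5 := lam.parts_sum
  rw [Finset.sum_multiset_count] at h5
  have h6 := Finset.single_le_sum (f := fun x => lam.parts.count x • x)
    (fun _ _ => Nat.zero_le _) hL1
  simp only [smul_eq_mul] at h5 h6
  nlinarith

lemma profile_of_le_deg {s q : ℕ} (hs : 1 ≤ s) (hqs : q ≤ s) (lam : (T s + q).Partition)
    (h : s * (s - 1) + rho q ≤ deg lam) :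
    deg lam = s * (s - 1) + rho q ∧ gapBonus lam + multBonus lam = rho q ∧
      T (gapBonus lam) + T (multBonus lam) ≤ q := by
  have hT := T_supp_add_le lam
  have ha := gapBonus_le_supp lam
  have hb := multBonus_le_supp lam
  have hTs := le_T s
  have hr0 := supp_ne_zero (by omega) lam
  have h4 := four_le_of_gapBonus_eq lam
  unfold deg at h ⊢
  generalize supp lam = r at *
  generalize gapBonus lam = a at *
  generalize multBonus lam = b at *
  obtain ⟨t, rfl⟩ : ∃ t, s = t + 1 := ⟨s - 1, by omega⟩
  obtain ⟨k, rfl⟩ : ∃ k, r = k + 1 := ⟨r - 1, by omega⟩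
  simp only [Nat.add_sub_cancel] at h ⊢
  have hrs : k ≤ t := by
    by_contra hlt
    have h1 := T_mono (show t + 1 + 1 ≤ k + 1 by omega)
    rw [T_succ (t + 1)] at h1
    omega
  rcases hrs.eq_or_lt with rfl | hlt
  · have hq : T a + T b ≤ q := by omega
    have := le_rho hq
    exact ⟨by omega, by omega, hq⟩
  · exfalso
    -- Here `deg ≤ (k + 1) * (k + 2) ≤ s * (s - 1)`, so all of these are equalities and `ρ(q) = 0`.
    have hk : t = k + 1 := by
      by_contra hne
      obtain ⟨u, rfl⟩ : ∃ u, t = k + 2 + u := ⟨t - (k + 2), by omega⟩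
      nlinarith
    subst hk
    have hab : a = k + 1 ∧ b = k + 1 ∧ rho q = 0 := by
      refine ⟨?_, ?_, ?_⟩ <;> nlinarith
    obtain ⟨rfl, rfl, hrho⟩ := hab
    have hq : q = 0 := by
      by_contra hq
      have h1 : T 1 + T 0 ≤ q := by simp only [T]; omega
      have := le_rho h1
      omega
    subst hq
    -- `3 * T (k + 1) ≤ T (k + 2)` leaves only partitions of `3`, which the gap condition excludes.
    have hk0 : k = 0 := by
      have h2 := two_mul_T (k + 1)
      rw [T_succ (k + 1)] at hT
      nlinarith
    subst hk0
    have := h4 rfl (by omega)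
    norm_num [T] at this

/-! ### The realizing partitions -/

/-- Sizes of the realizing partition: the staircase `i + 1` for `i < s`, with a gap opened below
each of the `a` largest sizes (the truncated difference counts the gaps at or below index `i`), and
`d` added to the largest one. -/
def stair (s a d i : ℕ) : ℕ := i + 1 + (i + 1 - (s - a)) + if i + 1 = s then d else 0

lemma stair_lt {s a d i j : ℕ} (hj : j < s) (hij : i < j) : stair s a d i < stair s a d j := by
  unfold stair
  split_ifs <;> omega

lemma stair_injOn (s a d : ℕ) : Set.InjOn (stair s a d) (Finset.range s) := by
  intro i hi j hj h
  simp only [Finset.coe_range, Set.mem_Iio] at hi hj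
  rcases lt_trichotomy i j with hl | hl | hl
  · have := stair_lt (a := a) (d := d) hj hl; omega
  · exact hl
  · have := stair_lt (a := a) (d := d) hi hl; omega

lemma sum_sub_eq_T (s a : ℕ) (ha : a ≤ s) :
    ∑ i ∈ Finset.range s, (i + 1 - (s - a)) = T a := by
  obtain ⟨c, rfl⟩ := Nat.exists_eq_add_of_le' ha
  rw [Finset.sum_range_add, Finset.sum_eq_zero, zero_add, ← sum_range_succ_eq_T]
  · refine Finset.sum_congr rfl fun i _ => ?_
    omega
  · intro i hi
    rw [Finset.mem_range] at hi
    omega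

lemma sum_stair (s a d : ℕ) (hs : 1 ≤ s) (ha : a ≤ s) :
    ∑ i ∈ Finset.range s, stair s a d i = T s + T a + d := by
  have h : ∑ i ∈ Finset.range s, (if i + 1 = s then d else 0) = d := by
    rw [Finset.sum_eq_single_of_mem (s - 1) (by simp; omega)]
    · rw [if_pos (by omega)]
    · intro i _ hi
      rw [if_neg (by omega)]
  simp only [stair, Finset.sum_add_distrib]
  rw [h, sum_sub_eq_T s a ha, ← sum_range_succ_eq_T s, Finset.sum_add_distrib]

lemma exists_partition {s a b d n : ℕ} (hs : 1 ≤ s) (hab : a + b ≤ s) (hd : a = 0 → d = 0)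
    (hn : T s + T a + d + T b = n) :
    ∃ lam : n.Partition, supp lam = s ∧ gapBonus lam = a ∧ multBonus lam = b := by
  let S : Finset ℕ := (Finset.range s).image (stair s a d)
  let D : Finset ℕ := (Finset.range b).image (· + 1)
  have hlow : ∀ i, i < s - a → stair s a d i = i + 1 := by
    intro i hi
    unfold stair
    split_ifs <;> omega
  have hhigh : ∀ i, i < s → s - a ≤ i → 2 ≤ stair s a d i ∧ stair s a d i - 1 ∉ S := by
    intro i hi hia
    have h1 : i + 2 ≤ stair s a d i := by unfold stair; omega
    refine ⟨by omega, fun hmem => ?_⟩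
    obtain ⟨j, hj, hji⟩ := Finset.mem_image.1 hmem
    rw [Finset.mem_range] at hj
    unfold stair at hji
    split_ifs at hji <;> omega
  have hDS : D ⊆ S := by
    intro x hx
    obtain ⟨i, hi, rfl⟩ := Finset.mem_image.1 hx
    rw [Finset.mem_range] at hi
    exact Finset.mem_image.2 ⟨i, Finset.mem_range.2 (by omega), hlow i (by omega)⟩
  have hsumS : ∑ x ∈ S, x = T s + T a + d := by
    rw [Finset.sum_image (stair_injOn s a d), sum_stair s a d hs (by omega)]
  have hsumD : ∑ x ∈ D, x = T b := by
    rw [Finset.sum_image (fun _ _ _ _ h => Nat.succ_injective h), sum_range_succ_eq_T]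
  have hcS : S.card = s := by
    rw [Finset.card_image_of_injOn (stair_injOn s a d), Finset.card_range]
  let lam : n.Partition :=
    { parts := S.val + D.val
      parts_pos := by
        intro x hx
        have hxS : x ∈ S := by
          rcases Multiset.mem_add.1 hx with h | h
          · exact h
          · exact hDS h
        obtain ⟨i, -, rfl⟩ := Finset.mem_image.1 hxS
        unfold stair
        omega
      parts_sum := by
        rw [Multiset.sum_add, Finset.sum_val, Finset.sum_val]
        simp only [id]
        rw [← hn, ← hsumS, ← hsumD] }
  have hset : lam.parts.toFinset = S := by
    change (S.val + D.val).toFinset = S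
    rw [Multiset.toFinset_add, Finset.val_toFinset, Finset.val_toFinset,
      Finset.union_eq_left.2 hDS]
  refine ⟨lam, ?_, ?_, ?_⟩
  · rw [supp, hset, hcS]
  · have hg : gaps S = (Finset.Ico (s - a) s).image (stair s a d) := by
      ext x
      simp only [gaps, Finset.mem_filter, Finset.mem_image, Finset.mem_Ico]
      constructor
      · rintro ⟨hxS, h2, hx⟩
        obtain ⟨i, hi, rfl⟩ := Finset.mem_image.1 hxS
        rw [Finset.mem_range] at hi
        refine ⟨i, ⟨?_, hi⟩, rfl⟩
        by_contra hlt
        push Not at hlt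
        rw [hlow i hlt] at h2 hx
        refine hx (Finset.mem_image.2 ⟨i - 1, Finset.mem_range.2 (by omega), ?_⟩)
        rw [hlow _ (by omega)]
        omega
      · rintro ⟨i, ⟨hi1, hi2⟩, rfl⟩
        exact ⟨Finset.mem_image_of_mem _ (Finset.mem_range.2 hi2), hhigh i hi2 hi1⟩
    rw [gapBonus_eq, hset, hg, Finset.card_image_of_injOn, Nat.card_Ico]
    · omega
    · exact (stair_injOn s a d).mono (by intro i; simp)
  · have hD : lam.parts.toFinset.filter (fun L => 2 ≤ lam.parts.count L) = D := by
      rw [hset]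
      ext x
      have hcount : lam.parts.count x = (if x ∈ S then 1 else 0) + if x ∈ D then 1 else 0 := by
        change (S.val + D.val).count x = _
        rw [Multiset.count_add, Multiset.count_eq_of_nodup S.nodup,
          Multiset.count_eq_of_nodup D.nodup]
        rfl
      rw [Finset.mem_filter, hcount]
      by_cases hx : x ∈ D
      · simp [hx, hDS hx]
      · simp only [hx, if_false, iff_false]
        split_ifs <;> omega
    rw [multBonus, hD, Finset.card_image_of_injective _ Nat.succ_injective, Finset.card_range]

/-- Every admissible pair is the profile of a partition of degree `s * (s - 1) + ρ(q)`. -/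
lemma exists_deg_eq {s q a b : ℕ} (hs : 1 ≤ s) (hqs : q ≤ s) (hab : a + b = rho q)
    (hT : T a + T b ≤ q) :
    ∃ lam : (T s + q).Partition,
      deg lam = s * (s - 1) + rho q ∧ gapBonus lam = a ∧ multBonus lam = b := by
  have h1 := le_T a
  have h2 := le_T b
  have hd : q - (T a + T b) ≤ a := by
    by_contra hlt
    have h3 : T (a + 1) + T b ≤ q := by rw [T_succ]; omega
    have := le_rho h3
    omega
  obtain ⟨lam, hr, hA, hB⟩ := exists_partition (s := s) (a := a) (b := b)
    (d := q - (T a + T b)) (n := T s + q) hs (by omega) (by omega) (by omega)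
  refine ⟨lam, ?_, hA, hB⟩
  rw [deg, hr, hA, hB, ← hab]
  omega

lemma maxDeg_eq {s q : ℕ} (hs : 1 ≤ s) (hqs : q ≤ s) :
    maxDeg (T s + q) = s * (s - 1) + rho q := by
  apply le_antisymm
  · refine Finset.sup_le fun lam _ => ?_
    by_contra hlt
    have := (profile_of_le_deg hs hqs lam (by omega)).1
    omega
  · obtain ⟨a, b, hab, hT⟩ := exists_rho q
    obtain ⟨lam, hdeg, -, -⟩ := exists_deg_eq hs hqs hab hT
    rw [← hdeg]
    exact Finset.le_sup (f := fun lam : (T s + q).Partition => deg lam) (Finset.mem_univ lam)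

/-- realization of all admissible maximizing profiles: the set of pairs
`(A(λ), B(λ))` over maximizers `λ ⊢ T s + q` is exactly
`{(a,b) : a + b = ρ(q), T a + T b ≤ q}`. -/
theorem all_profiles_realized (s q : ℕ) (hs : 1 ≤ s) (hqs : q ≤ s) :
    (∀ a b : ℕ, a + b = rho q → T a + T b ≤ q →
        ∃ lam : (T s + q).Partition,
          deg lam = maxDeg (T s + q) ∧ gapBonus lam = a ∧ multBonus lam = b) ∧
      {p : ℕ × ℕ |
          ∃ lam : (T s + q).Partition,
            deg lam = maxDeg (T s + q) ∧ gapBonus lam = p.1 ∧ multBonus lam = p.2} =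
        {p : ℕ × ℕ | p.1 + p.2 = rho q ∧ T p.1 + T p.2 ≤ q} := by
  rw [maxDeg_eq hs hqs]
  refine ⟨fun a b hab hT => exists_deg_eq hs hqs hab hT, ?_⟩
  ext ⟨a, b⟩
  constructor
  · rintro ⟨lam, hdeg, rfl, rfl⟩
    exact (profile_of_le_deg hs hqs lam hdeg.ge).2
  · rintro ⟨hab, hT⟩
    exact exists_deg_eq hs hqs hab hT


end PartitionDegree
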